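/- arXiv:1404.7357 — 2 statements merged into one kernel-verified Lean document; each statement's English description precedes it below -/
import Mathlib

section
/- Let B > 0, let g : ℝ → ℝ be continuously differentiable with g(0) = 0, g(B) = 0, and g(t) ≥ 0 for all t ∈ [0, B], and let f : ℂ → ℂ be complex-differentiable on an open set U ⊆ ℂ containing the region R = {t + i·s : t ∈ [0, B], 0 ≤ s ≤ g(t)}. Then ∫₀^B f(t) dt = ∫₀^B f(t + i·g(t)) · (1 + i·g′(t)) dt. -/
open Complex intervalIntegral

theorem contour_deformation (B : ℝ) (hB : 0 < B) (g : ℝ → ℝ)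
    (hg : ContDiff ℝ 1 g) (hg0 : g 0 = 0) (hgB : g B = 0)
    (hgpos : ∀ t ∈ Set.Icc 0 B, 0 ≤ g t)
    (f : ℂ → ℂ) (U : Set ℂ) (hU : IsOpen U)
    (hRU : {z : ℂ | ∃ t ∈ Set.Icc (0 : ℝ) B, ∃ s : ℝ, 0 ≤ s ∧ s ≤ g t ∧
      z = (t : ℂ) + Complex.I * s} ⊆ U)
    (hf : DifferentiableOn ℂ f U) :
    ∫ t in (0 : ℝ)..B, f t
      = ∫ t in (0 : ℝ)..B, f ((t : ℂ) + Complex.I * g t) * (1 + Complex.I * deriv g t) := by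
  have hgc : Continuous g := hg.continuous
  have hg'c : Continuous (deriv g) := hg.continuous_deriv le_rfl
  have hgd : ∀ t, HasDerivAt g (deriv g t) t := fun t =>
    (hg.differentiable one_ne_zero t).hasDerivAt
  have hgd' : ∀ t, HasDerivAt (fun t : ℝ => (g t : ℂ)) ((deriv g t : ℝ) : ℂ) t := fun t =>
    (hgd t).ofReal_comp
  have hf' : ContinuousOn (deriv f) U := (hf.deriv hU).continuousOn
  have hfd : ∀ z ∈ U, HasDerivAt f (deriv f z) z := fun z hz =>
    (hf.differentiableAt (hU.mem_nhds hz)).hasDerivAt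
  let z : ℝ → ℝ → ℂ := fun t l => (t : ℂ) + I * (l * g t)
  have hzU : ∀ t ∈ Set.Icc 0 B, ∀ l ∈ Set.Icc (0 : ℝ) 1, z t l ∈ U := by
    intro t ht l hl
    refine hRU ⟨t, ht, l * g t, mul_nonneg hl.1 (hgpos t ht), ?_, by simp [z]⟩
    exact mul_le_of_le_one_left (hgpos t ht) hl.2
  let H : ℝ → ℝ → ℂ := fun t l => f (z t l) * (1 + I * (l * deriv g t))
  let K : ℝ → ℝ → ℂ := fun t l =>
    deriv f (z t l) * (I * g t) * (1 + I * (l * deriv g t)) + f (z t l) * (I * deriv g t)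
  have hzc : Continuous (Function.uncurry z) := by
    simp only [z, Function.uncurry_def]; fun_prop
  have hmaps : Set.MapsTo (Function.uncurry z) (Set.Icc 0 B ×ˢ Set.Icc 0 1) U :=
    fun p hp => hzU p.1 hp.1 p.2 hp.2
  have hfz := hf.continuousOn.comp hzc.continuousOn hmaps
  have hfz' := hf'.comp hzc.continuousOn hmaps
  have hK : ContinuousOn (Function.uncurry K) (Set.Icc 0 B ×ˢ Set.Icc 0 1) := by
    have h1 : Continuous fun p : ℝ × ℝ => I * (g p.1 : ℂ) := by fun_prop
    have h2 : Continuous fun p : ℝ × ℝ => 1 + I * ((p.2 : ℂ) * ((deriv g p.1 : ℝ) : ℂ)) := by fun_prop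
    have h3 : Continuous fun p : ℝ × ℝ => I * ((deriv g p.1 : ℝ) : ℂ) := by fun_prop
    exact ((hfz'.mul h1.continuousOn).mul h2.continuousOn).add (hfz.mul h3.continuousOn)
  have hH : ContinuousOn (Function.uncurry H) (Set.Icc 0 B ×ˢ Set.Icc 0 1) := by
    have h2 : Continuous fun p : ℝ × ℝ => 1 + I * ((p.2 : ℂ) * ((deriv g p.1 : ℝ) : ℂ)) := by fun_prop
    exact hfz.mul h2.continuousOn
  -- slices
  have hs1 : ∀ (F : ℝ → ℝ → ℂ), ContinuousOn (Function.uncurry F) (Set.Icc 0 B ×ˢ Set.Icc 0 1) →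
      ∀ l ∈ Set.Icc (0 : ℝ) 1, IntervalIntegrable (fun t => F t l) MeasureTheory.volume 0 B := by
    intro F hF l hl
    apply ContinuousOn.intervalIntegrable_of_Icc hB.le
    exact hF.comp (f := fun t => (t, l)) (by fun_prop) (fun t ht => ⟨ht, hl⟩)
  have hs2 : ∀ t ∈ Set.Icc (0 : ℝ) B,
      IntervalIntegrable (fun l => K t l) MeasureTheory.volume 0 1 := by
    intro t ht
    apply ContinuousOn.intervalIntegrable_of_Icc zero_le_one
    exact hK.comp (f := fun l => (t, l)) (by fun_prop) (fun l hl => ⟨ht, hl⟩)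
  have hl1 : ∀ t ∈ Set.Icc (0 : ℝ) B, ∫ l in (0 : ℝ)..1, K t l = H t 1 - H t 0 := by
    intro t ht
    apply integral_eq_sub_of_hasDerivAt _ (hs2 t ht)
    intro l hl
    rw [Set.uIcc_of_le zero_le_one] at hl
    have hid : HasDerivAt (fun l : ℝ => (l : ℂ)) 1 l := (hasDerivAt_id l).ofReal_comp
    have hz : HasDerivAt (fun l => z t l) (I * (1 * g t)) l :=
      ((hid.mul_const (g t : ℂ)).const_mul I).const_add _
    have h1 := (hfd _ (hzU t ht l hl)).comp l hz
    have h2 := ((hid.mul_const ((deriv g t : ℝ) : ℂ)).const_mul I).const_add 1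
    refine (h1.mul h2).congr_deriv ?_
    simp only [K, Function.comp]; ring
  have ht1 : ∀ l ∈ Set.Icc (0 : ℝ) 1, ∫ t in (0 : ℝ)..B, K t l = 0 := by
    intro l hl
    rw [integral_eq_sub_of_hasDerivAt (f := fun t => f (z t l) * (I * g t)) _ (hs1 K hK l hl)]
    · simp [hg0, hgB]
    intro t ht
    rw [Set.uIcc_of_le hB.le] at ht
    have hid : HasDerivAt (fun t : ℝ => (t : ℂ)) 1 t := (hasDerivAt_id t).ofReal_comp
    have hz : HasDerivAt (fun t => z t l) (1 + I * (l * deriv g t)) t :=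
      hid.add (((hgd' t).const_mul (l : ℂ)).const_mul I)
    have h1 := (hfd _ (hzU t ht l hl)).comp t hz
    refine (h1.mul ((hgd' t).const_mul I)).congr_deriv ?_
    simp only [K, Function.comp]; ring
  have hswap : ∫ t in (0 : ℝ)..B, ∫ l in (0 : ℝ)..1, K t l
      = ∫ l in (0 : ℝ)..1, ∫ t in (0 : ℝ)..B, K t l := by
    simp only [intervalIntegral.integral_of_le hB.le, intervalIntegral.integral_of_le zero_le_one]
    apply MeasureTheory.integral_integral_swap
    rw [MeasureTheory.Measure.prod_restrict]
    exact (hK.integrableOn_compact (isCompact_Icc.prod isCompact_Icc)).mono_set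
      (Set.prod_mono Set.Ioc_subset_Icc_self Set.Ioc_subset_Icc_self)
  have e1 : ∫ t in (0 : ℝ)..B, ∫ l in (0 : ℝ)..1, K t l
      = (∫ t in (0 : ℝ)..B, H t 1) - ∫ t in (0 : ℝ)..B, H t 0 := by
    rw [← integral_sub (hs1 H hH 1 (by simp)) (hs1 H hH 0 (by simp))]
    apply integral_congr
    intro t ht
    rw [Set.uIcc_of_le hB.le] at ht
    exact hl1 t ht
  have e2 : ∫ l in (0 : ℝ)..1, ∫ t in (0 : ℝ)..B, K t l = 0 := by
    rw [integral_congr (g := fun _ => (0 : ℂ))]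
    · simp
    intro l hl
    rw [Set.uIcc_of_le zero_le_one] at hl
    exact ht1 l hl
  have e3 := e1.symm.trans (hswap.trans e2)
  have e4 := (sub_eq_zero.mp e3).symm
  simpa [H, z] using e4
end

section
/- Let Ĩ : ℝ² → ℂ be integrable and supported in the closed ball of radius k_m > 0 centered at the origin, let γ ≥ 0 be real and d = (Δx, Δy) ∈ ℝ². Then (1/4π²) ∫_{ℝ²} Ĩ(k) e^{−i(k_x Δx + k_y Δy)} e^{γ(k_x Δx + k_y Δy)} dk = Σ_{p=0}^{∞} Σ_{q=0}^{∞} (γ^{p+q} Δx^p Δy^q / (p! q!)) · (1/4π²) ∫_{ℝ²} k_x^p k_y^q Ĩ(k) e^{−i(k_x Δx + k_y Δy)} dk, where the double series converges absolutely. -/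
open MeasureTheory Complex

theorem hasSum_congr_aux {f g : ℕ × ℕ → ℂ} {a b : ℂ} (h : HasSum f a)
    (hfg : ∀ x, g x = f x) (hab : b = a) : HasSum g b := by
  obtain rfl : g = f := funext hfg
  rw [hab]
  exact h

theorem cfft_double_series (Itil : EuclideanSpace ℝ (Fin 2) → ℂ)
    (hI : Integrable Itil) (km : ℝ) (hkm : 0 < km)
    (hsupp : Function.support Itil ⊆ Metric.closedBall 0 km)
    (γ : ℝ) (hγ : 0 ≤ γ) (Δx Δy : ℝ) :
    HasSum
      (fun pq : ℕ × ℕ =>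
        ((γ : ℂ) ^ (pq.1 + pq.2) * (Δx : ℂ) ^ pq.1 * (Δy : ℂ) ^ pq.2 /
            (pq.1.factorial * pq.2.factorial)) *
          ((1 / (4 * (Real.pi : ℂ) ^ 2)) *
            ∫ k : EuclideanSpace ℝ (Fin 2),
              ((k 0 : ℂ)) ^ pq.1 * ((k 1 : ℂ)) ^ pq.2 * Itil k *
                Complex.exp (-Complex.I * (k 0 * Δx + k 1 * Δy : ℝ))))
      ((1 / (4 * (Real.pi : ℂ) ^ 2)) *
        ∫ k : EuclideanSpace ℝ (Fin 2),
          Itil k * Complex.exp (-Complex.I * (k 0 * Δx + k 1 * Δy : ℝ)) *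
            Complex.exp ((γ : ℂ) * (k 0 * Δx + k 1 * Δy : ℝ)))
    ∧ Summable
      (fun pq : ℕ × ℕ =>
        ‖((γ : ℂ) ^ (pq.1 + pq.2) * (Δx : ℂ) ^ pq.1 * (Δy : ℂ) ^ pq.2 /
            (pq.1.factorial * pq.2.factorial)) *
          ((1 / (4 * (Real.pi : ℂ) ^ 2)) *
            ∫ k : EuclideanSpace ℝ (Fin 2),
              ((k 0 : ℂ)) ^ pq.1 * ((k 1 : ℂ)) ^ pq.2 * Itil k *
                Complex.exp (-Complex.I * (k 0 * Δx + k 1 * Δy : ℝ)))‖) := by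
  set E : EuclideanSpace ℝ (Fin 2) → ℂ :=
    fun k => Complex.exp (-Complex.I * (k 0 * Δx + k 1 * Δy : ℝ)) with hE
  have hEn : ∀ k, ‖E k‖ = 1 := by
    intro k
    have : E k = Complex.exp (((-(k 0 * Δx + k 1 * Δy) : ℝ) : ℂ) * Complex.I) := by
      simp only [hE]
      congr 1
      push_cast
      ring
    rw [this, Complex.norm_exp_ofReal_mul_I]
  have hEc : Continuous E := by
    simp only [hE]
    fun_prop
  have hexp : ∀ z : ℂ, HasSum (fun n : ℕ => z ^ n / (n.factorial : ℂ)) (Complex.exp z) := by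
    intro z
    rw [Complex.exp_eq_exp_ℂ]
    exact NormedSpace.expSeries_div_hasSum_exp z
  have hrexp : ∀ z : ℝ, Summable (fun n : ℕ => z ^ n / (n.factorial : ℝ)) :=
    Real.summable_pow_div_factorial
  have hbsum : Summable (fun pq : ℕ × ℕ =>
      ((|γ| * |Δx| * km) ^ pq.1 / (pq.1.factorial : ℝ)) *
        ((|γ| * |Δy| * km) ^ pq.2 / (pq.2.factorial : ℝ))) :=
    (hrexp _).mul_of_nonneg (hrexp _) (fun n => by positivity) (fun n => by positivity)
  have hmul : ∀ f g : ℕ → ℂ, Summable (fun n => ‖f n‖) → Summable (fun n => ‖g n‖) →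
      Summable (fun x : ℕ × ℕ => f x.1 * g x.2) :=
    fun f g hf hg => summable_mul_of_summable_norm hf hg
  have main : HasSum
      (fun pq : ℕ × ℕ =>
        ∫ k : EuclideanSpace ℝ (Fin 2),
          ((γ : ℂ) ^ (pq.1 + pq.2) * (Δx : ℂ) ^ pq.1 * (Δy : ℂ) ^ pq.2 /
            (pq.1.factorial * pq.2.factorial)) *
            (((k 0 : ℂ)) ^ pq.1 * ((k 1 : ℂ)) ^ pq.2 * Itil k * E k))
      (∫ k : EuclideanSpace ℝ (Fin 2),
          Itil k * E k * Complex.exp ((γ : ℂ) * (k 0 * Δx + k 1 * Δy : ℝ))) := by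
    refine hasSum_integral_of_dominated_convergence
      (fun pq k => (((|γ| * |Δx| * km) ^ pq.1 / (pq.1.factorial : ℝ)) *
        ((|γ| * |Δy| * km) ^ pq.2 / (pq.2.factorial : ℝ))) * ‖Itil k‖) ?_ ?_ ?_ ?_ ?_
    · intro pq
      have h1 : Continuous (fun k : EuclideanSpace ℝ (Fin 2) =>
        ((k 0 : ℂ)) ^ pq.1 * ((k 1 : ℂ)) ^ pq.2) := by fun_prop
      exact ((h1.aestronglyMeasurable.mul hI.aestronglyMeasurable).mul
        hEc.aestronglyMeasurable).const_mul _
    · intro pq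
      refine Filter.Eventually.of_forall fun k => ?_
      by_cases hk : Itil k = 0
      · simp [hk]
      have hkn : ‖k‖ ≤ km := by
        have := hsupp (Function.mem_support.2 hk)
        simpa using this
      have h0 : |k 0| ≤ km := (PiLp.norm_apply_le k 0).trans hkn
      have h1 : |k 1| ≤ km := (PiLp.norm_apply_le k 1).trans hkn
      have e : ‖((γ : ℂ) ^ (pq.1 + pq.2) * (Δx : ℂ) ^ pq.1 * (Δy : ℂ) ^ pq.2 /
            (pq.1.factorial * pq.2.factorial)) *
            (((k 0 : ℂ)) ^ pq.1 * ((k 1 : ℂ)) ^ pq.2 * Itil k * E k)‖ =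
          (((|γ| * |Δx| * |k 0|) ^ pq.1 / (pq.1.factorial : ℝ)) *
            ((|γ| * |Δy| * |k 1|) ^ pq.2 / (pq.2.factorial : ℝ))) * ‖Itil k‖ := by
        simp only [norm_mul, norm_div, norm_pow, hEn, Complex.norm_real, Complex.norm_natCast,
          Real.norm_eq_abs]
        ring
      rw [e]
      gcongr
    · exact Filter.Eventually.of_forall fun k => hbsum.mul_right _
    · simp_rw [tsum_mul_right]
      exact hI.norm.const_mul _
    · refine Filter.Eventually.of_forall fun k => ?_
      have hx := hexp ((γ : ℂ) * Δx * k 0)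
      have hy := hexp ((γ : ℂ) * Δy * k 1)
      have hxy := hmul _ _ hx.summable.norm hy.summable.norm
      have hs := hx.mul hy hxy
      have := hs.mul_left (Itil k * E k)
      rw [← Complex.exp_add] at this
      refine hasSum_congr_aux this ?_ ?_
      · intro pq
        ring
      · congr 2
        push_cast
        ring
  have H := main.mul_left (1 / (4 * (Real.pi : ℂ) ^ 2))
  have H2 : HasSum
      (fun pq : ℕ × ℕ =>
        ((γ : ℂ) ^ (pq.1 + pq.2) * (Δx : ℂ) ^ pq.1 * (Δy : ℂ) ^ pq.2 /
            (pq.1.factorial * pq.2.factorial)) *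
          ((1 / (4 * (Real.pi : ℂ) ^ 2)) *
            ∫ k : EuclideanSpace ℝ (Fin 2),
              ((k 0 : ℂ)) ^ pq.1 * ((k 1 : ℂ)) ^ pq.2 * Itil k * E k))
      ((1 / (4 * (Real.pi : ℂ) ^ 2)) *
        ∫ k : EuclideanSpace ℝ (Fin 2),
          Itil k * E k * Complex.exp ((γ : ℂ) * (k 0 * Δx + k 1 * Δy : ℝ))) := by
    refine hasSum_congr_aux H ?_ rfl
    intro pq
    rw [integral_const_mul]
    ring
  exact ⟨H2, H2.summable.norm⟩
end
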